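/- Let d ≥ 1, T > 0, σ > 0. Let V : ℝ^d × [0,T] → ℝ be bounded and measurable, and let u₀ : ℝ^d → ℝ be bounded and continuous. Then there exists exactly one bounded measurable function u : ℝ^d × [0,T] → ℝ such that u(x,0) = u₀(x) for all x and, for all x ∈ ℝ^d and t ∈ (0,T], u satisfies the mild (Duhamel) formulation of the heat equation ∂u/∂t = (σ²/2) Δu + V u: u(x,t) = ∫_{ℝ^d} G_t(x−y) u₀(y) dy + ∫₀ᵗ ∫_{ℝ^d} G_{t−s}(x−y) V(y,s) u(y,s) dy ds, where G_t(x) := (2πσ²t)^{−d/2} e^{−|x|²/(2σ²t)} is the heat kernel. -/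

import Mathlib

/-!
For transition densities `k t x y` of mass at most one, the Duhamel operator
`K f (x, t) = ∫₀ᵗ ∫ k (t - s) x y * f (y, s) dy ds` is a Volterra operator: if `|f (·, s)| ≤ b s`,
then `|K f (·, t)| ≤ ∫₀ᵗ b`. A mild solution is a fixed point on `[0, T]` of the affine map
`Φ u = h + K (V u)`, where `h` is the free evolution of the initial data. When `|V| ≤ C`, two
sequences of Picard iterates of `Φ` that start at distance `M` are at distance at most
`M (C t)ⁿ / n!` after `n` steps. For the iterates of `0` and of `Φ 0` this makes the Picard
iteration converge uniformly to a fixed point; for two fixed points, which are constant Picard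
sequences, it forces equality.
-/

open scoped BigOperators
open MeasureTheory

/-- The heat kernel `G_t(x) = (2πσ²t)^{-d/2} e^{-|x|²/(2σ²t)}` of the equation
`∂u/∂t = (σ²/2)Δu` on `ℝ^d`. -/
noncomputable def heatKernel (d : ℕ) (σ : ℝ) (t : ℝ)
    (x : EuclideanSpace ℝ (Fin d)) : ℝ :=
  (2 * Real.pi * σ ^ 2 * t) ^ (-(d : ℝ) / 2) *
    Real.exp (-‖x‖ ^ 2 / (2 * σ ^ 2 * t))

open Filter Function Set Topology

variable {X : Type*} [MeasurableSpace X] {T : ℝ}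

/-! ### Bounded measurable functions -/

/-- Bounded measurable functions on `X × [0, T]`. They are encoded as functions defined and jointly
measurable for all times, of which only the restriction to `[0, T]` needs to be bounded. -/
structure IsBddMeasurable (T : ℝ) (f : X → ℝ → ℝ) : Prop where
  measurable : Measurable (uncurry f)
  bounded : ∃ M : ℝ, ∀ x, ∀ t ∈ Icc 0 T, |f x t| ≤ M

namespace IsBddMeasurable

variable {f g : X → ℝ → ℝ}

theorem zero : IsBddMeasurable T (0 : X → ℝ → ℝ) :=
  ⟨measurable_const, 0, fun _ _ _ => abs_zero.le⟩

theorem add (hf : IsBddMeasurable T f) (hg : IsBddMeasurable T g) :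
    IsBddMeasurable T fun x t => f x t + g x t := by
  obtain ⟨A, hA⟩ := hf.bounded
  obtain ⟨B, hB⟩ := hg.bounded
  exact ⟨hf.measurable.add hg.measurable, A + B,
    fun x t ht => (abs_add_le _ _).trans (add_le_add (hA x t ht) (hB x t ht))⟩

theorem mul (hf : IsBddMeasurable T f) (hg : IsBddMeasurable T g) :
    IsBddMeasurable T fun x t => f x t * g x t := by
  obtain ⟨A, hA⟩ := hf.bounded
  obtain ⟨B, hB⟩ := hg.bounded
  refine ⟨hf.measurable.mul hg.measurable, A * B, fun x t ht => ?_⟩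
  rw [abs_mul]
  exact mul_le_mul (hA x t ht) (hB x t ht) (abs_nonneg _) ((abs_nonneg _).trans (hA x t ht))

theorem exists_abs_sub_le (hf : IsBddMeasurable T f) (hg : IsBddMeasurable T g) :
    ∃ M : ℝ, ∀ x, ∀ t ∈ Icc 0 T, |f x t - g x t| ≤ M := by
  obtain ⟨A, hA⟩ := hf.bounded
  obtain ⟨B, hB⟩ := hg.bounded
  exact ⟨A + B, fun x t ht => (abs_sub _ _).trans (add_le_add (hA x t ht) (hB x t ht))⟩

theorem exists_abs_sub_le_tsum {f : ℕ → X → ℝ → ℝ} (hf : ∀ n, IsBddMeasurable T (f n))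
    {a : ℕ → ℝ} (ha : Summable a)
    (hfa : ∀ n x, ∀ t ∈ Icc 0 T, |f n x t - f (n + 1) x t| ≤ a n) :
    ∃ u, IsBddMeasurable T u ∧
      ∀ n x, ∀ t ∈ Icc 0 T, |f n x t - u x t| ≤ ∑' m, a (n + m) := by
  set u : X → ℝ → ℝ := fun x t => limUnder atTop fun n => f n x t
  have hfu : ∀ n x, ∀ t ∈ Icc 0 T, |f n x t - u x t| ≤ ∑' m, a (n + m) := by
    intro n x t ht
    have hcauchy : CauchySeq fun n => f n x t :=
      cauchySeq_of_dist_le_of_summable a (fun n => hfa n x t ht) ha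
    exact dist_le_tsum_of_dist_le_of_tendsto a (fun n => hfa n x t ht) ha hcauchy.tendsto_limUnder n
  obtain ⟨M, hM⟩ := (hf 0).bounded
  refine ⟨u, ⟨?_, M + ∑' m, a (0 + m), fun x t ht => ?_⟩, hfu⟩
  · exact (StronglyMeasurable.limUnder fun n => (hf n).measurable.stronglyMeasurable).measurable
  · have h := abs_sub_abs_le_abs_sub (u x t) (f 0 x t)
    rw [abs_sub_comm] at h
    linarith [hM x t ht, hfu 0 x t ht]

end IsBddMeasurable

/-! ### Fixed points of Volterra maps -/

/-- Volterra maps with constant `C`: maps `Φ` between bounded measurable functions on `X × [0, T]`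
such that `Φ f` and `Φ g` at time `t` differ by at most `C` times the integral over `[0, t]` of a
bound for `f - g`. This is the property that makes Picard iteration converge on all of `[0, T]`. -/
structure IsVolterraMap (T C : ℝ) (Φ : (X → ℝ → ℝ) → X → ℝ → ℝ) : Prop where
  nonneg : 0 ≤ C
  isBddMeasurable {f : X → ℝ → ℝ} : IsBddMeasurable T f → IsBddMeasurable T (Φ f)
  abs_sub_le {f g : X → ℝ → ℝ} (hf : IsBddMeasurable T f) (hg : IsBddMeasurable T g) {b : ℝ → ℝ}
    (hb : Continuous b) (hfg : ∀ x, ∀ t ∈ Icc 0 T, |f x t - g x t| ≤ b t) (x : X) {t : ℝ}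
    (ht : t ∈ Icc 0 T) : |Φ f x t - Φ g x t| ≤ C * ∫ s in (0 : ℝ)..t, b s

namespace IsVolterraMap

variable {C : ℝ} {Φ : (X → ℝ → ℝ) → X → ℝ → ℝ}

theorem abs_sub_le_pow_div_factorial (hΦ : IsVolterraMap T C Φ) {f g : ℕ → X → ℝ → ℝ}
    (hf : ∀ n, IsBddMeasurable T (f n)) (hg : ∀ n, IsBddMeasurable T (g n))
    (hf_succ : ∀ n x, ∀ t ∈ Icc 0 T, f (n + 1) x t = Φ (f n) x t)
    (hg_succ : ∀ n x, ∀ t ∈ Icc 0 T, g (n + 1) x t = Φ (g n) x t)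
    {M : ℝ} (h₀ : ∀ x, ∀ t ∈ Icc 0 T, |f 0 x t - g 0 x t| ≤ M) (n : ℕ) :
    ∀ x, ∀ t ∈ Icc 0 T, |f n x t - g n x t| ≤ M * ((C * t) ^ n / n.factorial) := by
  induction n with
  | zero => simpa using h₀
  | succ n ih =>
    intro x t ht
    rw [hf_succ n x t ht, hg_succ n x t ht]
    calc |Φ (f n) x t - Φ (g n) x t|
        ≤ C * ∫ s in (0 : ℝ)..t, M * ((C * s) ^ n / n.factorial) :=
          hΦ.abs_sub_le (hf n) (hg n) (by fun_prop) ih x ht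
      _ = C * (M * (C ^ n / n.factorial * (t ^ (n + 1) / (n + 1)))) := by
          simp only [mul_pow, mul_div_right_comm, intervalIntegral.integral_const_mul,
            integral_pow, zero_pow n.succ_ne_zero, sub_zero]
      _ = M * ((C * t) ^ (n + 1) / (n + 1).factorial) := by
          rw [Nat.factorial_succ]
          push_cast
          field_simp
          rw [mul_pow, pow_succ C]
          ring

theorem fixedPoint_unique (hΦ : IsVolterraMap T C Φ) {u v : X → ℝ → ℝ}
    (hu : IsBddMeasurable T u) (hv : IsBddMeasurable T v)
    (hu_fixed : ∀ x, ∀ t ∈ Icc 0 T, u x t = Φ u x t)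
    (hv_fixed : ∀ x, ∀ t ∈ Icc 0 T, v x t = Φ v x t) (x : X) {t : ℝ} (ht : t ∈ Icc 0 T) :
    u x t = v x t := by
  obtain ⟨M, hM⟩ := hu.exists_abs_sub_le hv
  have hbound : ∀ n : ℕ, |u x t - v x t| ≤ M * ((C * t) ^ n / n.factorial) := fun n =>
    hΦ.abs_sub_le_pow_div_factorial (fun _ => hu) (fun _ => hv) (fun _ => hu_fixed)
      (fun _ => hv_fixed) hM n x t ht
  have hlim : Tendsto (fun n : ℕ => M * ((C * t) ^ n / n.factorial)) atTop (𝓝 0) := by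
    simpa using (FloorSemiring.tendsto_pow_div_factorial_atTop (C * t)).const_mul M
  exact sub_eq_zero.1 (abs_nonpos_iff.1 (ge_of_tendsto' hlim hbound))

theorem fixedPoint_of_tendsto (hΦ : IsVolterraMap T C Φ) {f : ℕ → X → ℝ → ℝ} {u : X → ℝ → ℝ}
    (hf : ∀ n, IsBddMeasurable T (f n)) (hu : IsBddMeasurable T u)
    (hf_succ : ∀ n x, ∀ t ∈ Icc 0 T, f (n + 1) x t = Φ (f n) x t)
    {ε : ℕ → ℝ} (hε : Tendsto ε atTop (𝓝 0))
    (hfu : ∀ n x, ∀ t ∈ Icc 0 T, |f n x t - u x t| ≤ ε n) (x : X) {t : ℝ} (ht : t ∈ Icc 0 T) :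
    u x t = Φ u x t := by
  have hlim : Tendsto (fun n => f n x t) atTop (𝓝 (u x t)) :=
    tendsto_iff_norm_sub_tendsto_zero.2
      (squeeze_zero (fun _ => norm_nonneg _) (fun n => hfu n x t ht) hε)
  have hlim_succ : Tendsto (fun n => f (n + 1) x t) atTop (𝓝 (Φ u x t)) := by
    refine tendsto_iff_norm_sub_tendsto_zero.2 (squeeze_zero (g := fun n => C * (t * ε n))
      (fun _ => norm_nonneg _) (fun n => ?_) (by simpa using (hε.const_mul t).const_mul C))
    simpa [hf_succ n x t ht] using
      hΦ.abs_sub_le (hf n) hu (continuous_const (y := ε n)) (hfu n) x ht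
  exact tendsto_nhds_unique (hlim.comp (tendsto_add_atTop_nat 1)) hlim_succ

theorem exists_fixedPoint (hΦ : IsVolterraMap T C Φ) :
    ∃ u, IsBddMeasurable T u ∧ ∀ x, ∀ t ∈ Icc 0 T, u x t = Φ u x t := by
  set f : ℕ → X → ℝ → ℝ := fun n => Φ^[n] 0
  have hf_succ : ∀ n, f (n + 1) = Φ (f n) := fun n => iterate_succ_apply' Φ n 0
  have hf : ∀ n, IsBddMeasurable T (f n) := by
    intro n
    induction n with
    | zero => exact .zero
    | succ n ih => simpa only [hf_succ] using hΦ.isBddMeasurable ih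
  obtain ⟨M, hM⟩ := (hf 0).exists_abs_sub_le (hf 1)
  set a : ℕ → ℝ := fun n => M * ((C * T) ^ n / n.factorial)
  have ha : Summable a := (Real.summable_pow_div_factorial (C * T)).mul_left M
  have hfa : ∀ n x, ∀ t ∈ Icc 0 T, |f n x t - f (n + 1) x t| ≤ a n := by
    intro n x t ht
    refine (hΦ.abs_sub_le_pow_div_factorial hf (fun n => hf (n + 1))
      (fun n _ _ _ => by rw [hf_succ]) (fun n _ _ _ => by rw [hf_succ (n + 1)])
      hM n x t ht).trans ?_
    have hM₀ : 0 ≤ M := (abs_nonneg _).trans (hM x t ht)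
    have hCt : 0 ≤ C * t := mul_nonneg hΦ.nonneg ht.1
    have hCtT : C * t ≤ C * T := mul_le_mul_of_nonneg_left ht.2 hΦ.nonneg
    exact mul_le_mul_of_nonneg_left (by gcongr) hM₀
  obtain ⟨u, hu, hfu⟩ := IsBddMeasurable.exists_abs_sub_le_tsum hf ha hfa
  have htail : Tendsto (fun n => ∑' m, a (n + m)) atTop (𝓝 0) := by
    simpa only [add_comm] using tendsto_sum_nat_add a
  exact ⟨u, hu, fun x t ht =>
    hΦ.fixedPoint_of_tendsto hf hu (fun n _ _ _ => by rw [hf_succ]) htail hfu x ht⟩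

end IsVolterraMap

/-! ### Transition densities and the Duhamel operator -/

/-- The operator `f ↦ ∫ k t · y * f y ∂μ` with transition density `k t`; for the heat kernel this is
the heat semigroup. -/
noncomputable def transitionOp (k : ℝ → X → X → ℝ) (μ : Measure X) (t : ℝ) (f : X → ℝ) (x : X) :
    ℝ :=
  ∫ y, k t x y * f y ∂μ

/-- The Duhamel operator of a family of transition densities: the response at time `t` to a source
`f` switched on at time `0`. -/
noncomputable def duhamel (k : ℝ → X → X → ℝ) (μ : Measure X) (f : X → ℝ → ℝ) (x : X) (t : ℝ) : ℝ :=
  ∫ s in (0 : ℝ)..t, transitionOp k μ (t - s) (f · s) x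

/-- Sub-Markovian transition densities `k t x y` with respect to `μ`. Nothing is required of `k t`
for `t ≤ 0` beyond measurability, since formulas such as that of the heat kernel degenerate there;
nor is the semigroup property. -/
structure IsSubMarkovDensity (k : ℝ → X → X → ℝ) (μ : Measure X) : Prop where
  measurable : Measurable fun p : ℝ × X × X => k p.1 p.2.1 p.2.2
  nonneg {t : ℝ} (ht : 0 < t) (x y : X) : 0 ≤ k t x y
  integrable {t : ℝ} (ht : 0 < t) (x : X) : Integrable (k t x) μ
  integral_le_one {t : ℝ} (ht : 0 < t) (x : X) : ∫ y, k t x y ∂μ ≤ 1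

theorem stronglyMeasurable_intervalIntegral {α E : Type*} [MeasurableSpace α]
    [NormedAddCommGroup E] [NormedSpace ℝ E] {ν : Measure ℝ} [SFinite ν] {F : α → ℝ → E}
    (hF : StronglyMeasurable (uncurry F)) {a b : α → ℝ} (ha : Measurable a) (hb : Measurable b) :
    StronglyMeasurable fun p => ∫ s in a p..b p, F p s ∂ν := by
  have key : ∀ {c d : α → ℝ}, Measurable c → Measurable d →
      StronglyMeasurable fun p => ∫ s in Ioc (c p) (d p), F p s ∂ν := by
    intro c d hc hd
    have hS : MeasurableSet {q : α × ℝ | q.2 ∈ Ioc (c q.1) (d q.1)} :=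
      (measurableSet_lt (hc.comp measurable_fst) measurable_snd).inter
        (measurableSet_le measurable_snd (hd.comp measurable_fst))
    simp only [← integral_indicator measurableSet_Ioc]
    exact (hF.indicator hS).integral_prod_right'
  exact (key ha hb).sub (key hb ha)

namespace IsSubMarkovDensity

variable {k : ℝ → X → X → ℝ} {μ : Measure X}

theorem measurable_transitionOp [SFinite μ] (hk : IsSubMarkovDensity k μ) {α : Type*}
    [MeasurableSpace α] {τ : α → ℝ} {ξ : α → X} {f : α → X → ℝ} (hτ : Measurable τ)
    (hξ : Measurable ξ) (hf : Measurable (uncurry f)) :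
    Measurable fun a => transitionOp k μ (τ a) (f a) (ξ a) := by
  have hk' : Measurable fun p : α × X => k (τ p.1) (ξ p.1) p.2 :=
    hk.measurable.comp ((hτ.comp measurable_fst).prodMk
      ((hξ.comp measurable_fst).prodMk measurable_snd))
  exact (hk'.mul hf).stronglyMeasurable.integral_prod_right'.measurable

theorem integrable_mul (hk : IsSubMarkovDensity k μ) {t : ℝ} (ht : 0 < t) (x : X) {f : X → ℝ}
    (hf : Measurable f) {M : ℝ} (hM : ∀ y, |f y| ≤ M) : Integrable (fun y => k t x y * f y) μ :=
  (hk.integrable ht x).mul_bdd hf.aestronglyMeasurable (.of_forall hM)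

theorem abs_transitionOp_le (hk : IsSubMarkovDensity k μ) {t : ℝ} (ht : 0 < t) (x : X) {f : X → ℝ}
    {M : ℝ} (hM : ∀ y, |f y| ≤ M) : |transitionOp k μ t f x| ≤ M := by
  have hM₀ : 0 ≤ M := (abs_nonneg _).trans (hM x)
  calc |transitionOp k μ t f x|
      ≤ ∫ y, k t x y * M ∂μ := by
        refine norm_integral_le_of_norm_le (f := fun y => k t x y * f y)
          ((hk.integrable ht x).mul_const M) (.of_forall fun y => ?_)
        rw [norm_mul, Real.norm_of_nonneg (hk.nonneg ht x y)]
        exact mul_le_mul_of_nonneg_left (hM y) (hk.nonneg ht x y)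
    _ = (∫ y, k t x y ∂μ) * M := integral_mul_const M _
    _ ≤ M := mul_le_of_le_one_left hM₀ (hk.integral_le_one ht x)

variable {f g : X → ℝ → ℝ}

theorem measurable_duhamel [SFinite μ] (hk : IsSubMarkovDensity k μ) (hf : Measurable (uncurry f)) :
    Measurable (uncurry (duhamel k μ f)) := by
  have hF : Measurable fun q : (X × ℝ) × ℝ => transitionOp k μ (q.1.2 - q.2) (f · q.2) q.1.1 :=
    hk.measurable_transitionOp (τ := fun q => q.1.2 - q.2) (ξ := fun q => q.1.1)
      (f := fun (q : (X × ℝ) × ℝ) y => f y q.2) (by fun_prop) (by fun_prop)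
      (hf.comp (measurable_snd.prodMk (measurable_snd.comp measurable_fst)))
  exact (stronglyMeasurable_intervalIntegral (ν := volume)
    (F := fun (p : X × ℝ) s => transitionOp k μ (p.2 - s) (f · s) p.1)
    hF.stronglyMeasurable measurable_const measurable_snd).measurable

theorem ae_abs_transitionOp_le (hk : IsSubMarkovDensity k μ) {b : ℝ → ℝ} {t : ℝ}
    (hfb : ∀ y, ∀ s ∈ Icc 0 t, |f y s| ≤ b s) (x : X) :
    ∀ᵐ s, s ∈ Ioc 0 t → |transitionOp k μ (t - s) (f · s) x| ≤ b s := by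
  filter_upwards [Measure.ae_ne volume t] with s hst hs
  exact hk.abs_transitionOp_le (sub_pos.2 (hs.2.lt_of_ne hst)) x
    fun y => hfb y s (Ioc_subset_Icc_self hs)

theorem abs_duhamel_le (hk : IsSubMarkovDensity k μ) {b : ℝ → ℝ} (hb : Continuous b) {t : ℝ}
    (ht : 0 ≤ t) (hfb : ∀ y, ∀ s ∈ Icc 0 t, |f y s| ≤ b s) (x : X) :
    |duhamel k μ f x t| ≤ ∫ s in (0 : ℝ)..t, b s :=
  intervalIntegral.norm_integral_le_of_norm_le (f := fun s => transitionOp k μ (t - s) (f · s) x) ht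
    (hk.ae_abs_transitionOp_le hfb x) (hb.intervalIntegrable 0 t)

theorem intervalIntegrable_transitionOp [SFinite μ] (hk : IsSubMarkovDensity k μ)
    (hf : IsBddMeasurable T f) (x : X) {t : ℝ} (ht : t ∈ Icc 0 T) :
    IntervalIntegrable (fun s => transitionOp k μ (t - s) (f · s) x) volume 0 t := by
  obtain ⟨M, hM⟩ := hf.bounded
  have hmeas : Measurable fun s => transitionOp k μ (t - s) (f · s) x :=
    hk.measurable_transitionOp (f := fun s y => f y s) (by fun_prop) measurable_const
      (hf.measurable.comp measurable_swap)
  refine (intervalIntegrable_const (c := M)).mono_fun' hmeas.aestronglyMeasurable ?_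
  rw [uIoc_of_le ht.1]
  exact (ae_restrict_iff' measurableSet_Ioc).2
    (hk.ae_abs_transitionOp_le (fun y s hs => hM y s ⟨hs.1, hs.2.trans ht.2⟩) x)

theorem duhamel_sub [SFinite μ] (hk : IsSubMarkovDensity k μ) (hf : IsBddMeasurable T f)
    (hg : IsBddMeasurable T g) (x : X) {t : ℝ} (ht : t ∈ Icc 0 T) :
    duhamel k μ f x t - duhamel k μ g x t = duhamel k μ (fun y s => f y s - g y s) x t := by
  rw [duhamel, duhamel, ← intervalIntegral.integral_sub (hk.intervalIntegrable_transitionOp hf x ht)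
    (hk.intervalIntegrable_transitionOp hg x ht)]
  refine intervalIntegral.integral_congr_ae ?_
  rw [uIoc_of_le ht.1]
  filter_upwards [Measure.ae_ne volume t] with s hst hs
  have hts : 0 < t - s := sub_pos.2 (hs.2.lt_of_ne hst)
  have hint : ∀ {w : X → ℝ → ℝ}, IsBddMeasurable T w →
      Integrable (fun y => k (t - s) x y * w y s) μ := by
    intro w hw
    obtain ⟨M, hM⟩ := hw.bounded
    exact hk.integrable_mul hts x (hw.measurable.comp measurable_prodMk_right)
      fun y => hM y s ⟨hs.1.le, hs.2.trans ht.2⟩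
  simp only [transitionOp, mul_sub, integral_sub (hint hf) (hint hg)]

theorem isBddMeasurable_duhamel [SFinite μ] (hk : IsSubMarkovDensity k μ)
    (hf : IsBddMeasurable T f) : IsBddMeasurable T (duhamel k μ f) := by
  obtain ⟨M, hM⟩ := hf.bounded
  refine ⟨hk.measurable_duhamel hf.measurable, T * M, fun x t ht => ?_⟩
  have hM₀ : 0 ≤ M := (abs_nonneg _).trans (hM x t ht)
  calc |duhamel k μ f x t|
      ≤ ∫ _ in (0 : ℝ)..t, M :=
        hk.abs_duhamel_le continuous_const ht.1 (fun y s hs => hM y s ⟨hs.1, hs.2.trans ht.2⟩) x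
    _ = t * M := by simp
    _ ≤ T * M := mul_le_mul_of_nonneg_right ht.2 hM₀

theorem isVolterraMap_add_duhamel [SFinite μ] (hk : IsSubMarkovDensity k μ) {V h : X → ℝ → ℝ}
    (hh : IsBddMeasurable T h) (hV : Measurable (uncurry V)) {C : ℝ} (hC : 0 ≤ C)
    (hVC : ∀ x, ∀ t ∈ Icc 0 T, |V x t| ≤ C) :
    IsVolterraMap T C fun u x t => h x t + duhamel k μ (fun y s => V y s * u y s) x t where
  nonneg := hC
  isBddMeasurable hf := hh.add (hk.isBddMeasurable_duhamel (.mul ⟨hV, C, hVC⟩ hf))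
  abs_sub_le {f g} hf hg b hb hfg x t ht := by
    have hV' : IsBddMeasurable T V := ⟨hV, C, hVC⟩
    rw [add_sub_add_left_eq_sub, hk.duhamel_sub (hV'.mul hf) (hV'.mul hg) x ht,
      ← intervalIntegral.integral_const_mul]
    refine hk.abs_duhamel_le (by fun_prop) ht.1 (fun y s hs => ?_) x
    have hs' : s ∈ Icc 0 T := ⟨hs.1, hs.2.trans ht.2⟩
    rw [← mul_sub, abs_mul]
    exact mul_le_mul (hVC y s hs') (hfg y s hs') (abs_nonneg _) hC

end IsSubMarkovDensity

/-! ### Mild solutions -/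

/-- The evolution of `u₀` without potential. The value at `t = 0` is set separately because a
transition density need not make sense there. -/
noncomputable def freeEvolution (k : ℝ → X → X → ℝ) (μ : Measure X) (u₀ : X → ℝ) (x : X) (t : ℝ) :
    ℝ :=
  if t = 0 then u₀ x else transitionOp k μ t u₀ x

/-- Bounded measurable mild solutions on `X × [0, T]` of the evolution equation `∂u/∂t = L u + V u`
with initial data `u₀`, where `L` is the generator of the transition densities `k`; it enters only
through `k`. -/
def IsMildSolution (k : ℝ → X → X → ℝ) (μ : Measure X) (T : ℝ) (V : X → ℝ → ℝ) (u₀ : X → ℝ)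
    (u : X → ℝ → ℝ) : Prop :=
  Measurable (uncurry u) ∧
    (∃ C : ℝ, ∀ x, ∀ t ∈ Icc 0 T, |u x t| ≤ C) ∧
    (∀ x, u x 0 = u₀ x) ∧
    ∀ x, ∀ t ∈ Ioc 0 T, u x t = (∫ y, k t x y * u₀ y ∂μ) +
      ∫ s in (0 : ℝ)..t, ∫ y, k (t - s) x y * V y s * u y s ∂μ

theorem isMildSolution_iff {k : ℝ → X → X → ℝ} {μ : Measure X} {V u : X → ℝ → ℝ} {u₀ : X → ℝ}
    (hT : 0 ≤ T) :
    IsMildSolution k μ T V u₀ u ↔ IsBddMeasurable T u ∧ ∀ x, ∀ t ∈ Icc 0 T,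
      u x t = freeEvolution k μ u₀ x t + duhamel k μ (fun y s => V y s * u y s) x t := by
  simp only [IsMildSolution, freeEvolution, duhamel, transitionOp, mul_assoc]
  constructor
  · rintro ⟨hmeas, hbdd, hinit, hmild⟩
    refine ⟨⟨hmeas, hbdd⟩, fun x t ht => ?_⟩
    rcases ht.1.eq_or_lt with rfl | hpos
    · simp [hinit]
    · rw [if_neg hpos.ne', hmild x t ⟨hpos, ht.2⟩]
  · rintro ⟨hu, hfixed⟩
    refine ⟨hu.measurable, hu.bounded, fun x => ?_, fun x t ht => ?_⟩
    · simpa using hfixed x 0 ⟨le_rfl, hT⟩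
    · simpa only [if_neg ht.1.ne'] using hfixed x t ⟨ht.1.le, ht.2⟩

theorem IsSubMarkovDensity.isBddMeasurable_freeEvolution {k : ℝ → X → X → ℝ} {μ : Measure X}
    [SFinite μ] (hk : IsSubMarkovDensity k μ) {u₀ : X → ℝ} (hu₀ : Measurable u₀)
    (hu₀bdd : ∃ C : ℝ, ∀ x, |u₀ x| ≤ C) : IsBddMeasurable T (freeEvolution k μ u₀) := by
  obtain ⟨M, hM⟩ := hu₀bdd
  refine ⟨?_, M, fun x t ht => ?_⟩
  · exact Measurable.ite (measurable_snd (measurableSet_singleton 0)) (hu₀.comp measurable_fst)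
      (hk.measurable_transitionOp measurable_snd measurable_fst (hu₀.comp measurable_snd))
  · rw [freeEvolution]
    split_ifs with h
    · exact hM x
    · exact hk.abs_transitionOp_le (ht.1.lt_of_ne' h) x hM

theorem heat_equation_mild_solution_exists_unique_general {k : ℝ → X → X → ℝ} {μ : Measure X}
    [SFinite μ] (hk : IsSubMarkovDensity k μ) (hT : 0 ≤ T) {V : X → ℝ → ℝ}
    (hV : Measurable (uncurry V)) (hVbdd : ∃ C : ℝ, ∀ x, ∀ t ∈ Icc 0 T, |V x t| ≤ C) {u₀ : X → ℝ}
    (hu₀ : Measurable u₀) (hu₀bdd : ∃ C : ℝ, ∀ x, |u₀ x| ≤ C) :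
    ∃ u, IsMildSolution k μ T V u₀ u ∧
      ∀ v, IsMildSolution k μ T V u₀ v → ∀ x, ∀ t ∈ Icc 0 T, v x t = u x t := by
  obtain ⟨C, hC⟩ := hVbdd
  have hΦ := hk.isVolterraMap_add_duhamel (hk.isBddMeasurable_freeEvolution hu₀ hu₀bdd) hV
    (abs_nonneg C) fun x t ht => (hC x t ht).trans (le_abs_self C)
  obtain ⟨u, hu, hu_fixed⟩ := hΦ.exists_fixedPoint
  refine ⟨u, (isMildSolution_iff hT).2 ⟨hu, hu_fixed⟩, fun v hv x t ht => ?_⟩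
  obtain ⟨hv, hv_fixed⟩ := (isMildSolution_iff hT).1 hv
  exact hΦ.fixedPoint_unique hv hu hv_fixed hu_fixed x ht

/-! ### The heat kernel -/

section HeatKernel

variable {d : ℕ} {σ t : ℝ}

theorem heatKernel_nonneg (ht : 0 ≤ t) (x : EuclideanSpace ℝ (Fin d)) : 0 ≤ heatKernel d σ t x := by
  unfold heatKernel
  positivity

theorem measurable_heatKernel :
    Measurable fun p : ℝ × EuclideanSpace ℝ (Fin d) => heatKernel d σ p.1 p.2 := by
  unfold heatKernel
  fun_prop

theorem integral_heatKernel (hσ : σ ≠ 0) (ht : 0 < t) :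
    ∫ x : EuclideanSpace ℝ (Fin d), heatKernel d σ t x = 1 := by
  have hvar : 0 < 2 * Real.pi * σ ^ 2 * t := by positivity
  have hgauss : ∫ x : EuclideanSpace ℝ (Fin d), Real.exp (-‖x‖ ^ 2 / (2 * σ ^ 2 * t)) =
      (2 * Real.pi * σ ^ 2 * t) ^ ((d : ℝ) / 2) := by
    have h := GaussianFourier.integral_rexp_neg_mul_sq_norm (V := EuclideanSpace ℝ (Fin d))
      (b := (2 * σ ^ 2 * t)⁻¹) (by positivity)
    have hbase : Real.pi / (2 * σ ^ 2 * t)⁻¹ = 2 * Real.pi * σ ^ 2 * t := by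
      rw [div_inv_eq_mul]
      ring
    simpa only [finrank_euclideanSpace_fin, hbase, neg_mul, inv_mul_eq_div, neg_div] using h
  simp only [heatKernel]
  rw [integral_const_mul, hgauss, ← Real.rpow_add hvar, neg_div, neg_add_cancel, Real.rpow_zero]

theorem integrable_heatKernel (hσ : σ ≠ 0) (ht : 0 < t) :
    Integrable fun x : EuclideanSpace ℝ (Fin d) => heatKernel d σ t x :=
  .of_integral_ne_zero (by simp [integral_heatKernel hσ ht])

theorem isSubMarkovDensity_heatKernel (hσ : σ ≠ 0) :
    IsSubMarkovDensity (fun t (x y : EuclideanSpace ℝ (Fin d)) => heatKernel d σ t (x - y))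
      volume where
  measurable := measurable_heatKernel.comp (measurable_fst.prodMk (by fun_prop))
  nonneg ht x y := heatKernel_nonneg ht.le (x - y)
  integrable ht x := (integrable_heatKernel hσ ht).comp_sub_left x
  integral_le_one {t} ht x := by
    rw [integral_sub_left_eq_self (heatKernel d σ t), integral_heatKernel hσ ht]

end HeatKernel

/-- Existence and uniqueness of a bounded measurable mild (Duhamel) solution of
the heat equation with bounded measurable potential `V` and bounded continuous
initial data `u₀` on `ℝ^d × [0,T]`. -/
theorem heat_equation_mild_solution_exists_unique
    (d : ℕ) (hd : 1 ≤ d) (T σ : ℝ) (hT : 0 < T) (hσ : 0 < σ)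
    (V : EuclideanSpace ℝ (Fin d) → ℝ → ℝ)
    (hVmeas : Measurable (Function.uncurry V))
    (hVbdd : ∃ C : ℝ, ∀ x, ∀ t ∈ Set.Icc (0 : ℝ) T, |V x t| ≤ C)
    (u₀ : EuclideanSpace ℝ (Fin d) → ℝ)
    (hu₀cont : Continuous u₀) (hu₀bdd : ∃ C : ℝ, ∀ x, |u₀ x| ≤ C) :
    ∃ u : EuclideanSpace ℝ (Fin d) → ℝ → ℝ,
      (Measurable (Function.uncurry u) ∧
        (∃ C : ℝ, ∀ x, ∀ t ∈ Set.Icc (0 : ℝ) T, |u x t| ≤ C) ∧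
        (∀ x, u x 0 = u₀ x) ∧
        (∀ x, ∀ t ∈ Set.Ioc (0 : ℝ) T,
          u x t = (∫ y : EuclideanSpace ℝ (Fin d), heatKernel d σ t (x - y) * u₀ y)
            + ∫ s in (0 : ℝ)..t, ∫ y : EuclideanSpace ℝ (Fin d),
                heatKernel d σ (t - s) (x - y) * V y s * u y s)) ∧
      ∀ v : EuclideanSpace ℝ (Fin d) → ℝ → ℝ,
        (Measurable (Function.uncurry v) ∧
          (∃ C : ℝ, ∀ x, ∀ t ∈ Set.Icc (0 : ℝ) T, |v x t| ≤ C) ∧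
          (∀ x, v x 0 = u₀ x) ∧
          (∀ x, ∀ t ∈ Set.Ioc (0 : ℝ) T,
            v x t = (∫ y : EuclideanSpace ℝ (Fin d), heatKernel d σ t (x - y) * u₀ y)
              + ∫ s in (0 : ℝ)..t, ∫ y : EuclideanSpace ℝ (Fin d),
                  heatKernel d σ (t - s) (x - y) * V y s * v y s)) →
        ∀ x, ∀ t ∈ Set.Icc (0 : ℝ) T, v x t = u x t := by
  exact heat_equation_mild_solution_exists_unique_general
    (isSubMarkovDensity_heatKernel hσ.ne') hT.le hVmeas hVbdd hu₀cont.measurable hu₀bdd
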